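/- There exist C ≥ 0 and Δt* > 0 such that for all 0 < Δt ≤ Δt* and all q ∈ ℝⁿ, |E_{G,U}[δ_Δt(q,G,U)] + Δt ∇V(q) + √2 Δt² ∫_{ℝⁿ} ξ₊(q,g) g γ(dg)| ≤ C Δt^{5/2}. -/

import Mathlib

/-!
Write `ε = √Δt` and `d = √2 ε g - ε² ∇V(q)` for the proposed displacement. The logarithm of the
Metropolis ratio is the error of the trapezoidal rule for `V` along the segment from `q` to `q + d`
plus `(Δt/4) (|∇V(q)|² - |∇V(q+d)|²)`. The trapezoidal error is `D³V(q)(d,d,d)/12 + O(|d|⁴)` and the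
gradient difference is `-2 ⟪∇V(q), ∇²V(q) d⟫ + O(|d|²)`, so this logarithm equals `-ε³ ξ(q,g)` up to
`O(ε⁴ (1+|g|)⁴)` (`logRatio_expansion`). All constants are uniform in `q` because the derivatives of
`V` are continuous and periodic, hence bounded (`exists_derivBounds`).

Since `1 - min(1, eᵃ)` differs from the negative part of `a` by at most `a²`, the rejection
probability is `ε³ ξ₊ + O(ε⁴ (1+|g|)⁸)` (`rejection_expansion`). Multiplying by `d` gives a pointwise
expansion of the accepted displacement with error `O(ε⁵ (1+|g|)⁹)` (`pointwise_expansion`), which is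
integrated against the Gaussian, whose mean vanishes and whose moments are finite.
-/

open MeasureTheory RealInnerProductSpace

noncomputable section

abbrev En (n : ℕ) := EuclideanSpace ℝ (Fin n)

/-- Gaussian proposal density of the Euler–Maruyama scheme. -/
def Tker {n : ℕ} (V : En n → ℝ) (dt : ℝ) (q q' : En n) : ℝ :=
  (4 * Real.pi * dt) ^ (-(n : ℝ) / 2) *
    Real.exp (-‖q' - q + dt • gradient V q‖ ^ 2 / (4 * dt))

/-- Metropolis acceptance probability. -/
def Rk {n : ℕ} (V : En n → ℝ) (dt : ℝ) (q q' : En n) : ℝ :=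
  min 1 (Real.exp (-V q') * Tker V dt q' q / (Real.exp (-V q) * Tker V dt q q'))

/-- proposal move -/
def propMove {n : ℕ} (V : En n → ℝ) (dt : ℝ) (q g : En n) : En n :=
  q - dt • gradient V q + Real.sqrt (2 * dt) • g

def xi {n : ℕ} (V : En n → ℝ) (q g : En n) : ℝ :=
  -(Real.sqrt 2 / 6) * iteratedFDeriv ℝ 3 V q (fun _ => g) +
    (Real.sqrt 2 / 2) * ⟪gradient V q, fderiv ℝ (gradient V) q g⟫

def xiPlus {n : ℕ} (V : En n → ℝ) (q g : En n) : ℝ := max (xi V q g) 0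

/-- standard Gaussian measure on ℝⁿ -/
def gauss (n : ℕ) : Measure (En n) :=
  volume.withDensity fun g =>
    ENNReal.ofReal ((2 * Real.pi) ^ (-(n : ℝ) / 2) * Real.exp (-‖g‖ ^ 2 / 2))

/-- fundamental domain of the torus -/
def Box (n : ℕ) (L : ℝ) : Set (En n) := {q | ∀ i, q i ∈ Set.Ico (0 : ℝ) L}

/-- integral with respect to the Gibbs measure μ on the torus M -/
def muInt {n : ℕ} (V : En n → ℝ) (L : ℝ) (f : En n → ℝ) : ℝ :=
  (∫ q in Box n L, Real.exp (-V q))⁻¹ * ∫ q in Box n L, f q * Real.exp (-V q)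

/-- Laplacian -/
def lap {n : ℕ} (ψ : En n → ℝ) (q : En n) : ℝ :=
  ∑ i, iteratedFDeriv ℝ 2 ψ q (fun _ => EuclideanSpace.single i (1 : ℝ))

/-- generator of the overdamped Langevin dynamics -/
def gen {n : ℕ} (V ψ : En n → ℝ) (q : En n) : ℝ :=
  -⟪gradient V q, gradient ψ q⟫ + lap ψ q

/-- MALA transition operator on periodic functions -/
def Pmala {n : ℕ} (V : En n → ℝ) (dt : ℝ) (f : En n → ℝ) (q : En n) : ℝ :=
  f q + ∫ q', Rk V dt q q' * Tker V dt q q' * (f q' - f q)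

/-- the operator D₁ -/
def D1op {n : ℕ} (V ψ : En n → ℝ) (q : En n) : ℝ :=
  2 * ∑ i, ∑ j, (iteratedFDeriv ℝ 2 V q ![EuclideanSpace.single i (1:ℝ), EuclideanSpace.single j (1:ℝ)]) *
      (iteratedFDeriv ℝ 2 ψ q ![EuclideanSpace.single i (1:ℝ), EuclideanSpace.single j (1:ℝ)])
    + ⟪gradient (fun x => lap V x) q, gradient ψ q⟫
    - ⟪gradient V q, fderiv ℝ (gradient V) q (gradient ψ q)⟫

/-- the operator D₂ -/
def D2op {n : ℕ} (V ψ : En n → ℝ) (q : En n) : ℝ :=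
  -Real.sqrt 2 * ⟪∫ g, xiPlus V q g • g ∂(gauss n), gradient ψ q⟫

/-- the operator A appearing in the expansion of the MALA evolution operator -/
def Aop {n : ℕ} (V ψ : En n → ℝ) (q : En n) : ℝ :=
  (gen V (gen V ψ) q + D1op V ψ q + D2op V ψ q) / 2

/-- Metropolized increment -/
def deltaInc {n : ℕ} (V : En n → ℝ) (dt : ℝ) (q g : En n) (u : ℝ) : En n :=
  if u ≤ Rk V dt q (propMove V dt q g) then (-dt) • gradient V q + Real.sqrt (2 * dt) • g
  else 0

/-- expectation over G (std Gaussian) and U (uniform on [0,1]) of the increment -/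
def EguDelta {n : ℕ} (V : En n → ℝ) (dt : ℝ) (q : En n) : En n :=
  ∫ g, (∫ u in Set.Icc (0 : ℝ) 1, deltaInc V dt q g u) ∂(gauss n)


/-! ### Periodic functions are bounded -/

/-- A function on `ℝⁿ` that is `L`-periodic in each coordinate. -/
def CoordPeriodic {n : ℕ} {W : Type*} (L : ℝ) (F : En n → W) : Prop :=
  ∀ (q : En n) (i : Fin n), F (q + L • EuclideanSpace.single i (1 : ℝ)) = F q

theorem CoordPeriodic.add_lattice {n : ℕ} {W : Type*} {L : ℝ} {F : En n → W}
    (h : CoordPeriodic L F) (m : Fin n → ℤ) (s : Finset (Fin n)) (q : En n) :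
    F (q + ∑ i ∈ s, m i • (L • EuclideanSpace.single i (1 : ℝ))) = F q := by
  classical
  induction s using Finset.induction_on generalizing q with
  | empty => simp
  | insert a s ha ih =>
    rw [Finset.sum_insert ha, ← add_assoc, ih]
    have : Function.Periodic F (L • EuclideanSpace.single a (1 : ℝ)) := fun q => h q a
    exact this.zsmul (m a) q

theorem CoordPeriodic.bounded {n : ℕ} {W : Type*} [NormedAddCommGroup W] {L : ℝ} (hL : 0 < L)
    {F : En n → W} (h : CoordPeriodic L F) (hc : Continuous F) :
    ∃ M : ℝ, ∀ q, ‖F q‖ ≤ M := by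
  obtain ⟨M, hM⟩ := (isCompact_closedBall (0 : En n) (∑ _i : Fin n, L)).exists_bound_of_continuousOn
    hc.continuousOn
  refine ⟨M, fun q => ?_⟩
  rw [← h.add_lattice (fun i => -⌊q i / L⌋) Finset.univ q]
  apply hM
  rw [mem_closedBall_zero_iff]
  set x := q + ∑ i, (-⌊q i / L⌋) • (L • EuclideanSpace.single i (1 : ℝ)) with hx
  have hxi : ∀ i, |x i| ≤ L := by
    intro i
    have : x i = L * Int.fract (q i / L) := by
      have h1 : x i = q i - ⌊q i / L⌋ * L := by
        simp [hx, Finset.sum_apply, Pi.single_apply, sub_eq_add_neg]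
        ring
      rw [h1, Int.fract]
      field_simp
    rw [this, abs_of_nonneg (mul_nonneg hL.le (Int.fract_nonneg _))]
    exact mul_le_of_le_one_right hL.le (Int.fract_lt_one _).le
  calc ‖x‖ = ‖∑ i, x i • EuclideanSpace.single i (1 : ℝ)‖ := by
        congr 1
        ext j
        simp [Finset.sum_apply, Pi.single_apply]
    _ ≤ ∑ i, ‖x i • (EuclideanSpace.single i (1 : ℝ) : En n)‖ := norm_sum_le _ _
    _ ≤ ∑ _i : Fin n, L := by
        apply Finset.sum_le_sum
        intro i _
        simpa [norm_smul] using hxi i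

theorem CoordPeriodic.fderiv {n : ℕ} {W : Type*} [NormedAddCommGroup W] [NormedSpace ℝ W] {L : ℝ}
    {F : En n → W} (h : CoordPeriodic L F) : CoordPeriodic L (fderiv ℝ F) := by
  intro q i
  rw [← fderiv_comp_add_right]
  congr 1
  funext x
  exact h x i

theorem CoordPeriodic.iteratedFDeriv {n : ℕ} {W : Type*} [NormedAddCommGroup W] [NormedSpace ℝ W]
    {L : ℝ} {F : En n → W} (h : CoordPeriodic L F) (k : ℕ) :
    CoordPeriodic L (iteratedFDeriv ℝ k F) := by
  intro q i
  rw [← iteratedFDeriv_comp_add_right]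
  congr 1
  funext x
  exact h x i

theorem contDiff_gradient {n : ℕ} {V : En n → ℝ} (hV : ContDiff ℝ (⊤ : ℕ∞) V) :
    ContDiff ℝ (⊤ : ℕ∞) (gradient V) := by
  have : ContDiff ℝ (⊤ : ℕ∞) (fderiv ℝ V) := hV.fderiv_right (by simp)
  exact (InnerProductSpace.toDual ℝ (En n)).symm.contDiff.comp this

/-- `M` bounds every derivative of `V` and of `∇V` that enters the expansion. -/
structure DerivBounds {n : ℕ} (V : En n → ℝ) (M : ℝ) : Prop where
  grad : ∀ q, ‖gradient V q‖ ≤ M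
  fderiv_grad : ∀ q, ‖fderiv ℝ (gradient V) q‖ ≤ M
  fderiv2_grad : ∀ q, ‖fderiv ℝ (fderiv ℝ (gradient V)) q‖ ≤ M
  third : ∀ q, ‖iteratedFDeriv ℝ 3 V q‖ ≤ M
  fourth : ∀ q, ‖iteratedFDeriv ℝ 4 V q‖ ≤ M

theorem exists_derivBounds {n : ℕ} {L : ℝ} (hL : 0 < L) {V : En n → ℝ}
    (hV : ContDiff ℝ (⊤ : ℕ∞) V) (hper : CoordPeriodic L V) : ∃ M, 0 ≤ M ∧ DerivBounds V M := by
  have hG := contDiff_gradient hV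
  have hG1 : ContDiff ℝ (⊤ : ℕ∞) (fderiv ℝ (gradient V)) := hG.fderiv_right (by simp)
  have hG2 : ContDiff ℝ (⊤ : ℕ∞) (fderiv ℝ (fderiv ℝ (gradient V))) := hG1.fderiv_right (by simp)
  have pG : CoordPeriodic L (gradient V) := fun q i => by
    unfold gradient
    rw [hper.fderiv q i]
  obtain ⟨M0, h0⟩ := pG.bounded hL hG.continuous
  obtain ⟨M1, h1⟩ := pG.fderiv.bounded hL hG1.continuous
  obtain ⟨M2, h2⟩ := pG.fderiv.fderiv.bounded hL hG2.continuous
  obtain ⟨M3, h3⟩ := (hper.iteratedFDeriv 3).bounded hL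
    ((contDiff_infty.1 hV 3).continuous_iteratedFDeriv le_rfl)
  obtain ⟨M4, h4⟩ := (hper.iteratedFDeriv 4).bounded hL
    ((contDiff_infty.1 hV 4).continuous_iteratedFDeriv le_rfl)
  refine ⟨|M0| + |M1| + |M2| + |M3| + |M4|, by positivity, ?_, ?_, ?_, ?_, ?_⟩
  · intro q
    linarith [h0 q, le_abs_self M0, abs_nonneg M1, abs_nonneg M2, abs_nonneg M3, abs_nonneg M4]
  · intro q
    linarith [h1 q, le_abs_self M1, abs_nonneg M0, abs_nonneg M2, abs_nonneg M3, abs_nonneg M4]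
  · intro q
    linarith [h2 q, le_abs_self M2, abs_nonneg M1, abs_nonneg M0, abs_nonneg M3, abs_nonneg M4]
  · intro q
    linarith [h3 q, le_abs_self M3, abs_nonneg M1, abs_nonneg M2, abs_nonneg M0, abs_nonneg M4]
  · intro q
    linarith [h4 q, le_abs_self M4, abs_nonneg M1, abs_nonneg M2, abs_nonneg M3, abs_nonneg M0]

/-! ### Taylor expansions -/

theorem abs_le_of_deriv_bound {f f' : ℝ → ℝ} {K : ℝ} (hf : ∀ t, HasDerivAt f (f' t) t)
    (h0 : f 0 = 0) (hK : 0 ≤ K) (hb : ∀ t ∈ Set.Icc (0 : ℝ) 1, |f' t| ≤ K) :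
    ∀ t ∈ Set.Icc (0 : ℝ) 1, |f t| ≤ K := by
  intro t ht
  have := norm_image_sub_le_of_norm_deriv_le_segment' (a := 0) (b := 1) (f := f) (f' := f') (C := K)
    (fun x _ => (hf x).hasDerivWithinAt) (fun x hx => hb x ⟨hx.1, hx.2.le⟩) t ht
  rw [h0, sub_zero, sub_zero, Real.norm_eq_abs] at this
  exact this.trans (mul_le_of_le_one_right hK ht.2)

/-- The trapezoidal rule with its leading error term `-f'''/12` made explicit. -/
theorem trapezoid_expansion {f0 f1 f2 f3 f4 : ℝ → ℝ} {K : ℝ}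
    (h0 : ∀ t, HasDerivAt f0 (f1 t) t) (h1 : ∀ t, HasDerivAt f1 (f2 t) t)
    (h2 : ∀ t, HasDerivAt f2 (f3 t) t) (h3 : ∀ t, HasDerivAt f3 (f4 t) t)
    (hK : 0 ≤ K) (hb : ∀ t ∈ Set.Icc (0 : ℝ) 1, |f4 t| ≤ K) :
    |f0 0 - f0 1 + (f1 0 + f1 1) / 2 - f3 0 / 12| ≤ 2 * K := by
  have r3 := abs_le_of_deriv_bound (f := fun t => f3 t - f3 0) (f' := f4)
    (fun t => (h3 t).sub_const _) (by simp) hK hb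
  have r2 := abs_le_of_deriv_bound (f := fun t => f2 t - f2 0 - t * f3 0)
    (f' := fun t => f3 t - f3 0)
    (fun t => by
      refine (((h2 t).sub_const (f2 0)).sub ((hasDerivAt_id t).mul_const (f3 0))).congr_deriv ?_
      simp)
    (by simp) hK r3
  have r1 := abs_le_of_deriv_bound (f := fun t => f1 t - f1 0 - t * f2 0 - t ^ 2 * (f3 0 / 2))
    (f' := fun t => f2 t - f2 0 - t * f3 0)
    (fun t => by
      refine ((((h1 t).sub_const (f1 0)).sub ((hasDerivAt_id t).mul_const (f2 0))).sub
        ((hasDerivAt_pow 2 t).mul_const (f3 0 / 2))).congr_deriv ?_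
      simp; ring)
    (by simp) hK r2
  have r0 := abs_le_of_deriv_bound
    (f := fun t => f0 t - f0 0 - t * f1 0 - t ^ 2 * (f2 0 / 2) - t ^ 3 * (f3 0 / 6))
    (f' := fun t => f1 t - f1 0 - t * f2 0 - t ^ 2 * (f3 0 / 2))
    (fun t => by
      refine (((((h0 t).sub_const (f0 0)).sub ((hasDerivAt_id t).mul_const (f1 0))).sub
        ((hasDerivAt_pow 2 t).mul_const (f2 0 / 2))).sub
        ((hasDerivAt_pow 3 t).mul_const (f3 0 / 6))).congr_deriv ?_
      simp; ring)
    (by simp) hK r1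
  have a0 := abs_le.1 (r0 1 (by simp))
  have a1 := abs_le.1 (r1 1 (by simp))
  simp only [one_mul, one_pow] at a0 a1
  rw [abs_le]
  constructor <;> linarith [a0.1, a0.2, a1.1, a1.2]

theorem hasDerivAt_iteratedFDeriv_line {n : ℕ} {V : En n → ℝ} (hV : ContDiff ℝ (⊤ : ℕ∞) V)
    (q d : En n) (k : ℕ) (t : ℝ) :
    HasDerivAt (fun t : ℝ => iteratedFDeriv ℝ k V (q + t • d) (fun _ => d))
      (iteratedFDeriv ℝ (k + 1) V (q + t • d) (fun _ => d)) t := by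
  have hl : HasDerivAt (fun t : ℝ => q + t • d) d t := by
    simpa using ((hasDerivAt_id t).smul_const d).const_add q
  have hd : HasFDerivAt (iteratedFDeriv ℝ k V) (fderiv ℝ (iteratedFDeriv ℝ k V) (q + t • d))
      (q + t • d) :=
    (hV.differentiable_iteratedFDeriv (by exact_mod_cast ENat.natCast_lt_top k) _).hasFDerivAt
  have hc := hd.comp_hasDerivAt t hl
  have := (ContinuousMultilinearMap.apply ℝ (fun _ : Fin k => En n) ℝ
    (fun _ => d)).hasFDerivAt.comp_hasDerivAt t hc
  rw [iteratedFDeriv_succ_apply_left]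
  exact this

theorem inner_gradient {n : ℕ} {V : En n → ℝ} (q d : En n) :
    ⟪gradient V q, d⟫ = iteratedFDeriv ℝ 1 V q (fun _ => d) := by
  rw [iteratedFDeriv_one_apply, ← toDual_gradient, InnerProductSpace.toDual_apply_apply]

theorem trapezoid_V {n : ℕ} {V : En n → ℝ} (hV : ContDiff ℝ (⊤ : ℕ∞) V) {M : ℝ}
    (hM : DerivBounds V M) (hM0 : 0 ≤ M) (q d : En n) :
    |V q - V (q + d) + (⟪gradient V q, d⟫ + ⟪gradient V (q + d), d⟫) / 2
      - iteratedFDeriv ℝ 3 V q (fun _ => d) / 12| ≤ 2 * (M * ‖d‖ ^ 4) := by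
  have := trapezoid_expansion (hasDerivAt_iteratedFDeriv_line hV q d 0)
    (hasDerivAt_iteratedFDeriv_line hV q d 1) (hasDerivAt_iteratedFDeriv_line hV q d 2)
    (hasDerivAt_iteratedFDeriv_line hV q d 3) (K := M * ‖d‖ ^ 4) (by positivity) (by
      intro t _
      have := (iteratedFDeriv ℝ (3 + 1) V (q + t • d)).le_opNorm (fun _ => d)
      simp only [Finset.prod_const, Finset.card_univ, Fintype.card_fin] at this
      rw [← Real.norm_eq_abs]
      exact this.trans (mul_le_mul_of_nonneg_right (hM.fourth _) (by positivity)))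
  simpa [inner_gradient] using this

theorem gradient_expansion {n : ℕ} {V : En n → ℝ} (hV : ContDiff ℝ (⊤ : ℕ∞) V) {M : ℝ}
    (hM : DerivBounds V M) (q d : En n) :
    ‖gradient V (q + d) - gradient V q‖ ≤ M * ‖d‖ ∧
    ‖gradient V (q + d) - gradient V q - fderiv ℝ (gradient V) q d‖ ≤ M * ‖d‖ ^ 2 := by
  have hG := contDiff_gradient hV
  have hG1 : ContDiff ℝ (⊤ : ℕ∞) (fderiv ℝ (gradient V)) := hG.fderiv_right (by simp)
  have hM0 : 0 ≤ M := (norm_nonneg _).trans (hM.grad q)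
  constructor
  · simpa using Convex.norm_image_sub_le_of_norm_fderiv_le (𝕜 := ℝ) (f := gradient V) (s := Set.univ)
      (fun x _ => hG.differentiable (by simp) x) (fun x _ => hM.fderiv_grad x) convex_univ
      (Set.mem_univ q) (Set.mem_univ (q + d))
  · have hlip : ∀ x, ‖fderiv ℝ (gradient V) x - fderiv ℝ (gradient V) q‖ ≤ M * ‖x - q‖ :=
      fun x => Convex.norm_image_sub_le_of_norm_fderiv_le (𝕜 := ℝ) (f := fderiv ℝ (gradient V))
        (s := Set.univ) (fun x _ => hG1.differentiable (by simp) x)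
        (fun x _ => hM.fderiv2_grad x) convex_univ (Set.mem_univ q) (Set.mem_univ x)
    have := Convex.norm_image_sub_le_of_norm_fderiv_le' (𝕜 := ℝ) (f := gradient V)
      (s := Metric.closedBall q ‖d‖) (C := M * ‖d‖) (φ := fderiv ℝ (gradient V) q)
      (x := q) (y := q + d)
      (fun x _ => hG.differentiable (by simp) x)
      (fun x hx => (hlip x).trans (by
        gcongr
        rwa [mem_closedBall_iff_norm] at hx)) (convex_closedBall _ _)
      (by simp) (by simp)
    simpa [pow_two, mul_assoc] using this

/-! ### The acceptance probability -/

/-- The logarithm of the Metropolis ratio for the move `q → q + d`. -/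
def logRatio {n : ℕ} (V : En n → ℝ) (dt : ℝ) (q d : En n) : ℝ :=
  V q - V (q + d) + (⟪gradient V q, d⟫ + ⟪gradient V (q + d), d⟫) / 2
    + dt / 4 * (‖gradient V q‖ ^ 2 - ‖gradient V (q + d)‖ ^ 2)

theorem Rk_eq {n : ℕ} (V : En n → ℝ) {dt : ℝ} (hdt : 0 < dt) (q d : En n) :
    Rk V dt q (q + d) = min 1 (Real.exp (logRatio V dt q d)) := by
  unfold Rk Tker
  congr 1
  have hc : (0 : ℝ) < (4 * Real.pi * dt) ^ (-(n : ℝ) / 2) := by positivity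
  rw [mul_left_comm, mul_left_comm (Real.exp (-V q)), mul_div_mul_left _ _ hc.ne', ← Real.exp_add,
    ← Real.exp_add, ← Real.exp_sub]
  congr 1
  have e1 : q - (q + d) + dt • gradient V (q + d) = dt • gradient V (q + d) - d := by abel
  have e2 : q + d - q + dt • gradient V q = dt • gradient V q + d := by abel
  rw [e1, e2, norm_sub_sq_real, norm_add_sq_real, logRatio, norm_smul, norm_smul, real_inner_smul_left,
    real_inner_smul_left, Real.norm_eq_abs, abs_of_pos hdt]
  field_simp
  ring

/-- The proposed displacement with step `ε²`. -/
def disp {n : ℕ} (V : En n → ℝ) (ε : ℝ) (q g : En n) : En n :=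
  (Real.sqrt 2 * ε) • g - (ε ^ 2) • gradient V q

theorem sqrt_two_le : Real.sqrt 2 ≤ 2 := by
  rw [Real.sqrt_le_left (by norm_num)]
  norm_num

theorem norm_sqrt_smul_le {n : ℕ} {ε : ℝ} (hε : 0 ≤ ε) (g : En n) :
    ‖(Real.sqrt 2 * ε) • g‖ ≤ 2 * ε * ‖g‖ := by
  rw [norm_smul, Real.norm_eq_abs, abs_of_nonneg (by positivity)]
  gcongr
  exact sqrt_two_le

theorem norm_disp_le {n : ℕ} {V : En n → ℝ} {M : ℝ} (hM : DerivBounds V M) (hM1 : 1 ≤ M)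
    {ε : ℝ} (hε : 0 < ε) (hε1 : ε ≤ 1) (q g : En n) :
    ‖disp V ε q g‖ ≤ 2 * M * ε * (1 + ‖g‖) := by
  have h2 : ‖(ε ^ 2) • gradient V q‖ ≤ ε * M := by
    rw [norm_smul, Real.norm_eq_abs, abs_of_nonneg (by positivity)]
    have : ε ^ 2 ≤ ε := by nlinarith
    gcongr
    exact hM.grad q
  have h3 := norm_sub_le ((Real.sqrt 2 * ε) • g) ((ε ^ 2) • gradient V q)
  have h4 : 2 * ε * ‖g‖ ≤ 2 * ε * ‖g‖ * M := le_mul_of_one_le_right (by positivity) hM1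
  have h5 : 0 ≤ ε * M := by positivity
  have := norm_sqrt_smul_le hε.le g
  unfold disp
  nlinarith

theorem abs_xi_le {n : ℕ} {V : En n → ℝ} {M : ℝ} (hM : DerivBounds V M) (hM1 : 1 ≤ M)
    (q g : En n) : |xi V q g| ≤ 2 * M ^ 2 * (1 + ‖g‖) ^ 3 := by
  have h1 : |iteratedFDeriv ℝ 3 V q (fun _ => g)| ≤ M ^ 2 * (1 + ‖g‖) ^ 3 := by
    have := (iteratedFDeriv ℝ 3 V q).le_opNorm (fun _ => g)
    simp only [Finset.prod_const, Finset.card_univ, Fintype.card_fin] at this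
    rw [← Real.norm_eq_abs]
    refine this.trans ?_
    gcongr
    · exact (hM.third q).trans (by nlinarith)
    · linarith
  have h2 : |⟪gradient V q, fderiv ℝ (gradient V) q g⟫| ≤ M ^ 2 * (1 + ‖g‖) ^ 3 := by
    refine (abs_real_inner_le_norm _ _).trans ?_
    have h3 := (fderiv ℝ (gradient V) q).le_opNorm g
    calc _ ≤ M * (M * ‖g‖) := by
          gcongr
          · exact hM.grad q
          · refine h3.trans ?_
            gcongr
            exact hM.fderiv_grad q
      _ = M ^ 2 * ‖g‖ := by ring
      _ ≤ M ^ 2 * (1 + ‖g‖) ^ 3 := by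
          gcongr
          have : 1 + ‖g‖ ≤ (1 + ‖g‖) ^ 3 :=
            le_self_pow₀ (by linarith [norm_nonneg g]) (by norm_num)
          linarith
  unfold xi
  refine (abs_add_le _ _).trans ?_
  rw [abs_mul, abs_mul, abs_neg, abs_of_nonneg (by positivity : 0 ≤ Real.sqrt 2 / 6),
    abs_of_nonneg (by positivity : 0 ≤ Real.sqrt 2 / 2)]
  have h6 : Real.sqrt 2 / 6 ≤ 1 := by linarith [sqrt_two_le]
  have h7 : Real.sqrt 2 / 2 ≤ 1 := by linarith [sqrt_two_le]
  have h8 := mul_le_mul h6 h1 (abs_nonneg _) zero_le_one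
  have h9 := mul_le_mul h7 h2 (abs_nonneg _) zero_le_one
  linarith

/-- The drift part of the displacement changes the cubic term only at order `ε⁴`. -/
theorem cubic_term {n : ℕ} {V : En n → ℝ} {M : ℝ} (hM : DerivBounds V M) (hM1 : 1 ≤ M)
    {ε : ℝ} (hε : 0 < ε) (hε1 : ε ≤ 1) (q g : En n) :
    |iteratedFDeriv ℝ 3 V q (fun _ => disp V ε q g)
      - 2 * Real.sqrt 2 * ε ^ 3 * iteratedFDeriv ℝ 3 V q (fun _ => g)|
      ≤ 12 * M ^ 4 * ε ^ 4 * (1 + ‖g‖) ^ 2 := by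
  have h1 : iteratedFDeriv ℝ 3 V q (fun _ => (Real.sqrt 2 * ε) • g)
      = 2 * Real.sqrt 2 * ε ^ 3 * iteratedFDeriv ℝ 3 V q (fun _ => g) := by
    have := (iteratedFDeriv ℝ 3 V q).map_smul_univ (fun _ => Real.sqrt 2 * ε) (fun _ => g)
    simp only [Finset.prod_const, Finset.card_univ, Fintype.card_fin, smul_eq_mul] at this
    rw [this, mul_pow, pow_succ (Real.sqrt 2) 2, Real.sq_sqrt (by norm_num)]
  rw [← h1, ← Real.norm_eq_abs]
  refine ((iteratedFDeriv ℝ 3 V q).norm_image_sub_le _ _).trans ?_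
  have e : (fun _ : Fin 3 => disp V ε q g) - (fun _ => (Real.sqrt 2 * ε) • g)
      = fun _ => -((ε ^ 2) • gradient V q) := by
    funext i
    simp [disp]
  have hdr : ‖(ε ^ 2) • gradient V q‖ ≤ ε ^ 2 * M := by
    rw [norm_smul, Real.norm_eq_abs, abs_of_nonneg (by positivity)]
    gcongr
    exact hM.grad q
  rw [e, pi_norm_const, pi_norm_const, pi_norm_const, norm_neg, Fintype.card_fin]
  have hmax : max ‖disp V ε q g‖ ‖(Real.sqrt 2 * ε) • g‖ ≤ 2 * M * ε * (1 + ‖g‖) := by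
    refine max_le (norm_disp_le hM hM1 hε hε1 q g) ((norm_sqrt_smul_le hε.le g).trans ?_)
    have h4 : 2 * ε * ‖g‖ ≤ 2 * ε * ‖g‖ * M := le_mul_of_one_le_right (by positivity) hM1
    have h5 : 0 ≤ ε * M := by positivity
    nlinarith
  calc _ ≤ M * ((3 : ℕ) : ℝ) * (2 * M * ε * (1 + ‖g‖)) ^ (3 - 1) * (ε ^ 2 * M) := by
        gcongr
        exact hM.third q
    _ = _ := by norm_num; ring

theorem logRatio_expansion {n : ℕ} {V : En n → ℝ} (hV : ContDiff ℝ (⊤ : ℕ∞) V) {M : ℝ}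
    (hM : DerivBounds V M) (hM1 : 1 ≤ M) {ε : ℝ} (hε : 0 < ε) (hε1 : ε ≤ 1) (q g : En n) :
    |logRatio V (ε ^ 2) q (disp V ε q g) + ε ^ 3 * xi V q g|
      ≤ 37 * M ^ 5 * ε ^ 4 * (1 + ‖g‖) ^ 4 := by
  have hM0 : 0 ≤ M := by linarith
  have hd := norm_disp_le hM hM1 hε hε1 q g
  have hcub := cubic_term hM hM1 hε hε1 q g
  set d := disp V ε q g with hdd
  set N := 1 + ‖g‖ with hN
  have hN1 : 1 ≤ N := by linarith [norm_nonneg g]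
  have htr := trapezoid_V hV hM hM0 q d
  have hdp : ∀ k : ℕ, ‖d‖ ^ k ≤ (2 * M * ε * N) ^ k := fun k => by gcongr
  obtain ⟨hg1, hg2⟩ := gradient_expansion hV hM q d
  set p := gradient V q with hp
  set p' := gradient V (q + d) with hp'
  set A := fderiv ℝ (gradient V) q with hA
  have htr' : 2 * (M * ‖d‖ ^ 4) ≤ 32 * M ^ 5 * ε ^ 4 * N ^ 4 := by
    calc _ ≤ 2 * (M * (2 * M * ε * N) ^ 4) := by gcongr
      _ = _ := by ring
  -- `|∇V(q+d)|² - |∇V(q)|² = 2 ⟪∇V(q), ∇²V(q) d⟫ + O(|d|²)`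
  have hsq : |‖p'‖ ^ 2 - ‖p‖ ^ 2 - 2 * ⟪p, A d⟫| ≤ 12 * M ^ 4 * ε ^ 2 * N ^ 4 := by
    have e : ‖p'‖ ^ 2 - ‖p‖ ^ 2 - 2 * ⟪p, A d⟫ = 2 * ⟪p, p' - p - A d⟫ + ‖p' - p‖ ^ 2 := by
      rw [norm_sub_sq_real, inner_sub_right, inner_sub_right, real_inner_self_eq_norm_sq,
        real_inner_comm p p']
      ring
    rw [e]
    refine (abs_add_le _ _).trans ?_
    rw [abs_mul, abs_two, abs_of_nonneg (sq_nonneg ‖p' - p‖)]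
    have i1 : |⟪p, p' - p - A d⟫| ≤ M * (M * ‖d‖ ^ 2) := by
      refine (abs_real_inner_le_norm _ _).trans ?_
      gcongr
      exact hM.grad q
    have i2 : ‖p' - p‖ ^ 2 ≤ (M * ‖d‖) ^ 2 := by gcongr
    calc _ ≤ 2 * (M * (M * ‖d‖ ^ 2)) + (M * ‖d‖) ^ 2 := by gcongr
      _ = 3 * M ^ 2 * ‖d‖ ^ 2 := by ring
      _ ≤ 3 * M ^ 2 * (2 * M * ε * N) ^ 2 := by gcongr
      _ = 12 * M ^ 4 * ε ^ 2 * N ^ 2 := by ring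
      _ ≤ _ := by
        gcongr 12 * M ^ 4 * ε ^ 2 * ?_
        exact pow_le_pow_right₀ hN1 (by norm_num)
  have hlin : |⟪p, A d⟫ - Real.sqrt 2 * ε * ⟪p, A g⟫| ≤ M ^ 3 * ε ^ 2 := by
    have e : ⟪p, A d⟫ - Real.sqrt 2 * ε * ⟪p, A g⟫ = -(ε ^ 2 * ⟪p, A p⟫) := by
      rw [hdd, disp, map_sub, map_smul, map_smul, inner_sub_right, real_inner_smul_right,
        real_inner_smul_right]
      ring
    rw [e, abs_neg, abs_mul, abs_of_nonneg (sq_nonneg ε)]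
    have i1 : |⟪p, A p⟫| ≤ M * (M * M) := by
      refine (abs_real_inner_le_norm _ _).trans ?_
      gcongr
      · exact hM.grad q
      · refine (A.le_opNorm p).trans ?_
        gcongr
        · exact hM.fderiv_grad q
        · exact hM.grad q
    calc _ ≤ ε ^ 2 * (M * (M * M)) := by gcongr
      _ = _ := by ring
  have e : logRatio V (ε ^ 2) q d + ε ^ 3 * xi V q g =
      (V q - V (q + d) + (⟪p, d⟫ + ⟪p', d⟫) / 2 - iteratedFDeriv ℝ 3 V q (fun _ => d) / 12)
      + (iteratedFDeriv ℝ 3 V q (fun _ => d)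
          - 2 * Real.sqrt 2 * ε ^ 3 * iteratedFDeriv ℝ 3 V q (fun _ => g)) / 12
      + (-(ε ^ 2 / 4)) * (‖p'‖ ^ 2 - ‖p‖ ^ 2 - 2 * ⟪p, A d⟫)
      + (-(ε ^ 2 / 2)) * (⟪p, A d⟫ - Real.sqrt 2 * ε * ⟪p, A g⟫) := by
    unfold logRatio xi
    ring
  rw [e]
  refine (abs_add_le _ _).trans ?_
  have b1 := (abs_add_three (V q - V (q + d) + (⟪p, d⟫ + ⟪p', d⟫) / 2
      - iteratedFDeriv ℝ 3 V q (fun _ => d) / 12)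
    ((iteratedFDeriv ℝ 3 V q (fun _ => d)
          - 2 * Real.sqrt 2 * ε ^ 3 * iteratedFDeriv ℝ 3 V q (fun _ => g)) / 12)
    ((-(ε ^ 2 / 4)) * (‖p'‖ ^ 2 - ‖p‖ ^ 2 - 2 * ⟪p, A d⟫)))
  rw [abs_div _ (12 : ℝ), abs_mul (-(ε ^ 2 / 4)), abs_neg,
    abs_of_nonneg (by positivity : 0 ≤ ε ^ 2 / 4), abs_of_pos (by norm_num : (0 : ℝ) < 12)] at b1
  rw [abs_mul (-(ε ^ 2 / 2)), abs_neg, abs_of_nonneg (by positivity : 0 ≤ ε ^ 2 / 2)]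
  have c2 := mul_le_mul_of_nonneg_left hsq (by positivity : 0 ≤ ε ^ 2 / 4)
  have c3 := mul_le_mul_of_nonneg_left hlin (by positivity : 0 ≤ ε ^ 2 / 2)
  have hpow : ∀ a b : ℕ, a ≤ 5 → b ≤ 4 → M ^ a * ε ^ 4 * N ^ b ≤ M ^ 5 * ε ^ 4 * N ^ 4 := by
    intro a b ha hb
    gcongr
  have d1 := hpow 4 4 (by norm_num) le_rfl
  have d2 := hpow 4 2 (by norm_num) (by norm_num)
  have d3 := hpow 3 0 (by norm_num) (by norm_num)
  have d4 := hpow 5 4 le_rfl le_rfl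
  have d5 : 0 ≤ M ^ 5 * ε ^ 4 * N ^ 4 := by positivity
  rw [pow_zero] at d3
  linarith

theorem abs_rejection_sub_le (a : ℝ) : |(1 - min 1 (Real.exp a)) - max (-a) 0| ≤ a ^ 2 := by
  rcases le_total 0 a with h | h
  · rw [min_eq_left (Real.one_le_exp h), max_eq_right (by linarith)]
    simp [sq_nonneg]
  · rw [min_eq_right (Real.exp_le_one_iff.2 h), max_eq_left (by linarith)]
    have e : 1 - Real.exp a - -a = -(Real.exp a - 1 - a) := by ring
    rw [e, abs_neg]
    rcases le_total (-1) a with h1 | h1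
    · exact Real.abs_exp_sub_one_sub_id_le (abs_le.2 ⟨h1, by linarith⟩)
    · have := Real.add_one_le_exp a
      have := Real.exp_le_one_iff.2 h
      rw [abs_of_nonneg (by linarith)]
      nlinarith

theorem rejection_expansion {n : ℕ} {V : En n → ℝ} (hV : ContDiff ℝ (⊤ : ℕ∞) V) {M : ℝ}
    (hM : DerivBounds V M) (hM1 : 1 ≤ M) {ε : ℝ} (hε : 0 < ε) (hε1 : ε ≤ 1) (q g : En n) :
    |(1 - Rk V (ε ^ 2) q (q + disp V ε q g)) - ε ^ 3 * xiPlus V q g|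
      ≤ 1600 * M ^ 10 * ε ^ 4 * (1 + ‖g‖) ^ 8 := by
  rw [Rk_eq V (by positivity)]
  have h1 := logRatio_expansion hV hM hM1 hε hε1 q g
  have h2 := abs_xi_le hM hM1 q g
  set a := logRatio V (ε ^ 2) q (disp V ε q g)
  set N := 1 + ‖g‖ with hN
  have hN1 : 1 ≤ N := by linarith [norm_nonneg g]
  have h3 := abs_rejection_sub_le a
  have h4 : |max (-a) 0 - ε ^ 3 * xiPlus V q g| ≤ 37 * M ^ 5 * ε ^ 4 * N ^ 4 := by
    have : ε ^ 3 * xiPlus V q g = max (ε ^ 3 * xi V q g) 0 := by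
      rw [xiPlus, mul_max_of_nonneg _ _ (by positivity), mul_zero]
    rw [this]
    refine (abs_max_sub_max_le_abs _ _ _).trans ?_
    rw [← abs_neg]
    refine le_trans (le_of_eq ?_) h1
    congr 1
    ring
  have hpow : ∀ a b c : ℕ, a ≤ 10 → 4 ≤ c → b ≤ 8 →
      M ^ a * ε ^ c * N ^ b ≤ M ^ 10 * ε ^ 4 * N ^ 8 := by
    intro a b c ha hc hb
    have := pow_le_pow_of_le_one hε.le hε1 hc
    gcongr
  have h5 : |a| ≤ 39 * M ^ 5 * ε ^ 3 * N ^ 4 := by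
    have t : |a| ≤ |a + ε ^ 3 * xi V q g| + |ε ^ 3 * xi V q g| := by
      refine le_trans (le_of_eq ?_) (abs_sub (a + ε ^ 3 * xi V q g) (ε ^ 3 * xi V q g))
      congr 1
      ring
    rw [abs_mul (ε ^ 3), abs_of_nonneg (by positivity : 0 ≤ ε ^ 3)] at t
    have t1 : ε ^ 3 * |xi V q g| ≤ 2 * (M ^ 5 * ε ^ 3 * N ^ 4) := by
      calc _ ≤ ε ^ 3 * (2 * M ^ 2 * N ^ 3) := by gcongr
        _ = 2 * (M ^ 2 * ε ^ 3 * N ^ 3) := by ring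
        _ ≤ 2 * (M ^ 5 * ε ^ 3 * N ^ 4) := by
          gcongr
          · norm_num
          · norm_num
    have t2 : M ^ 5 * ε ^ 4 * N ^ 4 ≤ M ^ 5 * ε ^ 3 * N ^ 4 := by
      have := pow_le_pow_of_le_one hε.le hε1 (by norm_num : 3 ≤ 4)
      gcongr
    linarith
  have h6 : a ^ 2 ≤ 1521 * (M ^ 10 * ε ^ 6 * N ^ 8) := by
    rw [← sq_abs]
    calc _ ≤ (39 * M ^ 5 * ε ^ 3 * N ^ 4) ^ 2 := by gcongr
      _ = _ := by ring
  have d1 := hpow 10 8 6 (by norm_num) (by norm_num) (by norm_num)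
  have d2 := hpow 5 4 4 (by norm_num) (by norm_num) (by norm_num)
  have d3 : 0 ≤ M ^ 10 * ε ^ 4 * N ^ 8 := by positivity
  have h7 := abs_sub_le (1 - min 1 (Real.exp a)) (max (-a) 0) (ε ^ 3 * xiPlus V q g)
  linarith

theorem xiPlus_nonneg {n : ℕ} (V : En n → ℝ) (q g : En n) : 0 ≤ xiPlus V q g := le_max_right _ _

theorem xiPlus_le {n : ℕ} {V : En n → ℝ} {M : ℝ} (hM : DerivBounds V M) (hM1 : 1 ≤ M)
    (q g : En n) : xiPlus V q g ≤ 2 * M ^ 2 * (1 + ‖g‖) ^ 3 :=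
  max_le ((le_abs_self _).trans (abs_xi_le hM hM1 q g)) (by positivity)

/-- Pointwise form of the expansion: the accepted displacement minus its mean-zero part `√2 ε g`
is `-ε² ∇V - √2 ε⁴ ξ₊ g`, up to `O(ε⁵)` with polynomial growth in `g`. -/
theorem pointwise_expansion {n : ℕ} {V : En n → ℝ} (hV : ContDiff ℝ (⊤ : ℕ∞) V) {M : ℝ}
    (hM : DerivBounds V M) (hM1 : 1 ≤ M) {ε : ℝ} (hε : 0 < ε) (hε1 : ε ≤ 1) (q g : En n) :
    ‖Rk V (ε ^ 2) q (q + disp V ε q g) • disp V ε q g - (Real.sqrt 2 * ε) • g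
        + (ε ^ 2) • gradient V q + (Real.sqrt 2 * ε ^ 4) • (xiPlus V q g • g)‖
      ≤ 5000 * M ^ 11 * ε ^ 5 * (1 + ‖g‖) ^ 9 := by
  have h1 := rejection_expansion hV hM hM1 hε hε1 q g
  have h2 := xiPlus_le hM hM1 q g
  have h2' := xiPlus_nonneg V q g
  set R := Rk V (ε ^ 2) q (q + disp V ε q g)
  set N := 1 + ‖g‖ with hN
  have hN1 : 1 ≤ N := by linarith [norm_nonneg g]
  have e : R • disp V ε q g - (Real.sqrt 2 * ε) • g
        + (ε ^ 2) • gradient V q + (Real.sqrt 2 * ε ^ 4) • (xiPlus V q g • g)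
      = ((1 - R) * ε ^ 2) • gradient V q
        - ((1 - R) - ε ^ 3 * xiPlus V q g) • ((Real.sqrt 2 * ε) • g) := by
    unfold disp
    module
  rw [e]
  refine (norm_sub_le _ _).trans ?_
  rw [norm_smul, norm_smul, Real.norm_eq_abs, Real.norm_eq_abs, abs_mul,
    abs_of_nonneg (sq_nonneg ε)]
  have h3 : |1 - R| ≤ 1602 * (M ^ 10 * ε ^ 3 * N ^ 8) := by
    have t : |1 - R| ≤ |1 - R - ε ^ 3 * xiPlus V q g| + |ε ^ 3 * xiPlus V q g| := by
      refine le_trans (le_of_eq ?_)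
        (abs_add_le (1 - R - ε ^ 3 * xiPlus V q g) (ε ^ 3 * xiPlus V q g))
      congr 1
      ring
    rw [abs_of_nonneg (by positivity : 0 ≤ ε ^ 3 * xiPlus V q g)] at t
    have t1 : ε ^ 3 * xiPlus V q g ≤ 2 * (M ^ 10 * ε ^ 3 * N ^ 8) := by
      calc _ ≤ ε ^ 3 * (2 * M ^ 2 * N ^ 3) := by gcongr
        _ = 2 * (M ^ 2 * ε ^ 3 * N ^ 3) := by ring
        _ ≤ 2 * (M ^ 10 * ε ^ 3 * N ^ 8) := by
          gcongr
          · norm_num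
          · norm_num
    have t2 : M ^ 10 * ε ^ 4 * N ^ 8 ≤ M ^ 10 * ε ^ 3 * N ^ 8 := by
      have := pow_le_pow_of_le_one hε.le hε1 (by norm_num : 3 ≤ 4)
      gcongr
    linarith
  have h4 := norm_sqrt_smul_le hε.le g
  have h5 : |1 - R| * ε ^ 2 * ‖gradient V q‖ ≤ 1602 * (M ^ 11 * ε ^ 5 * N ^ 9) := by
    calc _ ≤ 1602 * (M ^ 10 * ε ^ 3 * N ^ 8) * ε ^ 2 * M := by
          gcongr
          exact hM.grad q
      _ = 1602 * (M ^ 11 * ε ^ 5 * N ^ 8) := by ring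
      _ ≤ _ := by
          gcongr 1602 * (M ^ 11 * ε ^ 5 * ?_)
          exact pow_le_pow_right₀ hN1 (by norm_num)
  have h6 : |1 - R - ε ^ 3 * xiPlus V q g| * ‖(Real.sqrt 2 * ε) • g‖
      ≤ 3200 * (M ^ 11 * ε ^ 5 * N ^ 9) := by
    calc _ ≤ (1600 * M ^ 10 * ε ^ 4 * N ^ 8) * (2 * ε * N) := by
          gcongr
          refine h4.trans ?_
          gcongr
          linarith
      _ = 3200 * (M ^ 10 * ε ^ 5 * N ^ 9) := by ring
      _ ≤ _ := by
          gcongr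
          norm_num
  have : 0 ≤ M ^ 11 * ε ^ 5 * N ^ 9 := by positivity
  linarith

/-! ### The Gaussian measure -/

/-- The density of `gauss n`. -/
def gaussDensity {n : ℕ} (g : En n) : ℝ :=
  (2 * Real.pi) ^ (-(n : ℝ) / 2) * Real.exp (-‖g‖ ^ 2 / 2)

theorem gaussDensity_nonneg {n : ℕ} (g : En n) : 0 ≤ gaussDensity g := by
  unfold gaussDensity
  positivity

theorem continuous_gaussDensity {n : ℕ} : Continuous (gaussDensity (n := n)) := by
  unfold gaussDensity
  fun_prop

theorem gauss_eq (n : ℕ) :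
    gauss n = volume.withDensity fun g => ENNReal.ofReal (gaussDensity g) := rfl

theorem integral_gauss {n : ℕ} {W : Type*} [NormedAddCommGroup W] [NormedSpace ℝ W]
    (f : En n → W) : ∫ g, f g ∂(gauss n) = ∫ g, gaussDensity g • f g := by
  rw [gauss_eq, integral_withDensity_eq_integral_toReal_smul
    continuous_gaussDensity.measurable.ennreal_ofReal (by simp)]
  simp_rw [ENNReal.toReal_ofReal (gaussDensity_nonneg _)]

theorem integrable_gauss_iff {n : ℕ} {W : Type*} [NormedAddCommGroup W] [NormedSpace ℝ W]
    (f : En n → W) : Integrable f (gauss n) ↔ Integrable fun g => gaussDensity g • f g := by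
  rw [gauss_eq, integrable_withDensity_iff_integrable_smul'
    continuous_gaussDensity.measurable.ennreal_ofReal (by simp)]
  simp_rw [ENNReal.toReal_ofReal (gaussDensity_nonneg _)]

theorem integral_exp_neg_mul {n : ℕ} {b : ℝ} (hb : 0 < b) :
    ∫ g : En n, Real.exp (-b * ‖g‖ ^ 2) = (Real.pi / b) ^ ((n : ℝ) / 2) := by
  simpa using GaussianFourier.integral_rexp_neg_mul_sq_norm (V := En n) hb

theorem integral_gaussDensity (n : ℕ) : ∫ g : En n, gaussDensity g = 1 := by
  have h := integral_exp_neg_mul (n := n) (b := 1 / 2) (by norm_num)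
  have e : ∀ g : En n, gaussDensity g
      = (2 * Real.pi) ^ (-(n : ℝ) / 2) * Real.exp (-(1 / 2) * ‖g‖ ^ 2) := by
    intro g
    unfold gaussDensity
    congr 2
    ring
  simp_rw [e]
  rw [integral_const_mul, h, neg_div, Real.rpow_neg (by positivity)]
  have : Real.pi / (1 / 2) = 2 * Real.pi := by ring
  rw [this]
  exact inv_mul_cancel₀ (by positivity)

instance (n : ℕ) : IsProbabilityMeasure (gauss n) := by
  constructor
  rw [gauss_eq, withDensity_apply _ MeasurableSet.univ, Measure.restrict_univ,
    ← ofReal_integral_eq_lintegral_ofReal (integrable_of_integral_eq_one (integral_gaussDensity n))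
      (Filter.Eventually.of_forall gaussDensity_nonneg), integral_gaussDensity, ENNReal.ofReal_one]

theorem integral_gauss_id (n : ℕ) : ∫ g, g ∂(gauss n) = 0 := by
  rw [integral_gauss]
  have h := integral_neg_eq_self (fun g : En n => gaussDensity g • g) volume
  have e : ∀ g : En n, gaussDensity (-g) • (-g) = -(gaussDensity g • g) := by
    intro g
    simp [gaussDensity]
  simp_rw [e] at h
  rw [integral_neg] at h
  have h2 : (2 : ℝ) • ∫ g : En n, gaussDensity g • g = 0 := by
    rw [two_smul]
    nth_rewrite 1 [← h]
    exact neg_add_cancel _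
  exact (smul_eq_zero.1 h2).resolve_left two_ne_zero

theorem integrable_pow_gauss (n k : ℕ) : Integrable (fun g => (1 + ‖g‖) ^ k) (gauss n) := by
  rw [integrable_gauss_iff]
  have hexp : Integrable (fun g : En n => Real.exp (-(1 / 4) * ‖g‖ ^ 2)) := by
    by_contra hne
    have h := integral_exp_neg_mul (n := n) (b := 1 / 4) (by norm_num)
    rw [integral_undef hne] at h
    have : 0 < (Real.pi / (1 / 4)) ^ ((n : ℝ) / 2) := by positivity
    linarith
  refine (hexp.const_mul ((2 * Real.pi) ^ (-(n : ℝ) / 2) * (k.factorial * Real.exp 2))).mono'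
    (by
      have := continuous_gaussDensity (n := n)
      exact Continuous.aestronglyMeasurable (by fun_prop)) ?_
  refine Filter.Eventually.of_forall fun g => ?_
  have h1 : (1 + ‖g‖) ^ k ≤ k.factorial * Real.exp (1 + ‖g‖) := by
    have := Real.pow_div_factorial_le_exp (1 + ‖g‖) (by positivity) k
    rwa [div_le_iff₀ (by positivity), mul_comm] at this
  have h2 : Real.exp (1 + ‖g‖) ≤ Real.exp (2 + ‖g‖ ^ 2 / 4) := by
    apply Real.exp_le_exp.2
    nlinarith [sq_nonneg (‖g‖ / 2 - 1)]
  have h3 : Real.exp (-‖g‖ ^ 2 / 2) * Real.exp (2 + ‖g‖ ^ 2 / 4)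
      = Real.exp 2 * Real.exp (-(1 / 4) * ‖g‖ ^ 2) := by
    rw [← Real.exp_add, ← Real.exp_add]
    congr 1
    ring
  rw [Real.norm_eq_abs, smul_eq_mul, abs_of_nonneg (mul_nonneg (gaussDensity_nonneg g)
    (by positivity))]
  calc gaussDensity g * (1 + ‖g‖) ^ k
      ≤ gaussDensity g * (k.factorial * Real.exp (2 + ‖g‖ ^ 2 / 4)) := by
        apply mul_le_mul_of_nonneg_left _ (gaussDensity_nonneg g)
        exact h1.trans (by gcongr)
    _ = (2 * Real.pi) ^ (-(n : ℝ) / 2) * k.factorial *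
          (Real.exp (-‖g‖ ^ 2 / 2) * Real.exp (2 + ‖g‖ ^ 2 / 4)) := by
        unfold gaussDensity
        ring
    _ = _ := by
        rw [h3]
        ring

/-! ### The expected increment -/

theorem propMove_eq {n : ℕ} (V : En n → ℝ) {ε : ℝ} (hε : 0 ≤ ε) (q g : En n) :
    propMove V (ε ^ 2) q g = q + disp V ε q g := by
  unfold propMove disp
  rw [Real.sqrt_mul (by norm_num), Real.sqrt_sq hε]
  abel

theorem integral_deltaInc {n : ℕ} (V : En n → ℝ) {ε : ℝ} (hε : 0 < ε) (q g : En n) :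
    ∫ u in Set.Icc (0 : ℝ) 1, deltaInc V (ε ^ 2) q g u
      = Rk V (ε ^ 2) q (q + disp V ε q g) • disp V ε q g := by
  have hR0 : 0 ≤ Rk V (ε ^ 2) q (q + disp V ε q g) := by
    rw [Rk_eq V (by positivity)]
    exact le_min zero_le_one (Real.exp_pos _).le
  have hR1 : Rk V (ε ^ 2) q (q + disp V ε q g) ≤ 1 := min_le_left _ _
  have e : (fun u => deltaInc V (ε ^ 2) q g u)
      = (Set.Iic (Rk V (ε ^ 2) q (q + disp V ε q g))).indicator (fun _ => disp V ε q g) := by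
    funext u
    unfold deltaInc
    rw [propMove_eq V hε.le, Set.indicator_apply]
    simp only [Set.mem_Iic]
    congr 1
    unfold disp
    rw [Real.sqrt_mul (by norm_num), Real.sqrt_sq hε.le, neg_smul]
    abel
  rw [e, setIntegral_indicator measurableSet_Iic, setIntegral_const]
  congr 1
  have : Set.Icc (0 : ℝ) 1 ∩ Set.Iic (Rk V (ε ^ 2) q (q + disp V ε q g))
      = Set.Icc 0 (Rk V (ε ^ 2) q (q + disp V ε q g)) := by
    ext u
    simp only [Set.mem_inter_iff, Set.mem_Icc, Set.mem_Iic]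
    exact ⟨fun h => ⟨h.1.1, h.2⟩, fun h => ⟨⟨h.1, h.2.trans hR1⟩, h.2⟩⟩
  rw [this, Real.volume_real_Icc_of_le hR0, sub_zero]

theorem continuous_xiPlus_smul {n : ℕ} (V : En n → ℝ) (q : En n) :
    Continuous fun g => xiPlus V q g • g := by
  unfold xiPlus xi
  fun_prop

theorem continuous_accepted {n : ℕ} {V : En n → ℝ} (hV : ContDiff ℝ (⊤ : ℕ∞) V) {ε : ℝ}
    (hε : 0 < ε) (q : En n) :
    Continuous fun g => Rk V (ε ^ 2) q (q + disp V ε q g) • disp V ε q g := by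
  have h1 := hV.continuous
  have h2 := (contDiff_gradient hV).continuous
  simp_rw [Rk_eq V (by positivity : 0 < ε ^ 2)]
  unfold logRatio disp
  fun_prop

theorem integral_gauss_combination {n : ℕ} {f x : En n → En n}
    (hid : Integrable (fun g : En n => g) (gauss n)) (hf : Integrable f (gauss n))
    (hx : Integrable x (gauss n)) {a b : ℝ} {p : En n} :
    ∫ g, (f g - a • g + p + b • x g) ∂(gauss n)
      = ∫ g, f g ∂(gauss n) + p + b • ∫ g, x g ∂(gauss n) := by
  have i1 : Integrable (fun g : En n => a • g) (gauss n) := hid.smul a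
  have i2 : Integrable (fun g => f g - a • g) (gauss n) := hf.sub i1
  have i3 : Integrable (fun g => f g - a • g + p) (gauss n) := i2.add (integrable_const p)
  have i4 : Integrable (fun g => b • x g) (gauss n) := hx.smul b
  rw [integral_add i3 i4, integral_add i2 (integrable_const _), integral_sub hf i1, integral_smul,
    integral_smul, integral_gauss_id, integral_const, probReal_univ, one_smul, smul_zero, sub_zero]

theorem expected_expansion {n : ℕ} {V : En n → ℝ} (hV : ContDiff ℝ (⊤ : ℕ∞) V) {M : ℝ}
    (hM : DerivBounds V M) (hM1 : 1 ≤ M) {ε : ℝ} (hε : 0 < ε) (hε1 : ε ≤ 1) (q : En n) :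
    ‖EguDelta V (ε ^ 2) q + (ε ^ 2) • gradient V q +
          (Real.sqrt 2 * (ε ^ 2) ^ 2) • ∫ g, xiPlus V q g • g ∂(gauss n)‖ ≤
      5000 * M ^ 11 * ε ^ 5 * ∫ g, (1 + ‖g‖) ^ 9 ∂(gauss n) := by
  have hid : Integrable (fun g : En n => g) (gauss n) := by
    refine (integrable_pow_gauss n 1).mono' continuous_id.aestronglyMeasurable
      (Filter.Eventually.of_forall fun g => ?_)
    simp
  have hxi : Integrable (fun g => xiPlus V q g • g) (gauss n) := by
    refine ((integrable_pow_gauss n 4).const_mul (2 * M ^ 2)).mono'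
      (continuous_xiPlus_smul V q).aestronglyMeasurable (Filter.Eventually.of_forall fun g => ?_)
    rw [norm_smul, Real.norm_eq_abs, abs_of_nonneg (xiPlus_nonneg V q g)]
    calc _ ≤ (2 * M ^ 2 * (1 + ‖g‖) ^ 3) * (1 + ‖g‖) := by
          gcongr
          · exact xiPlus_le hM hM1 q g
          · linarith
      _ = _ := by ring
  have hacc : Integrable (fun g => Rk V (ε ^ 2) q (q + disp V ε q g) • disp V ε q g)
      (gauss n) := by
    refine ((integrable_pow_gauss n 1).const_mul (2 * M * ε)).mono'
      (continuous_accepted hV hε q).aestronglyMeasurable (Filter.Eventually.of_forall fun g => ?_)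
    rw [norm_smul, Real.norm_eq_abs, pow_one]
    have hR : |Rk V (ε ^ 2) q (q + disp V ε q g)| ≤ 1 := by
      rw [Rk_eq V (by positivity), abs_of_nonneg (le_min zero_le_one (Real.exp_pos _).le)]
      exact min_le_left _ _
    exact (mul_le_of_le_one_left (norm_nonneg _) hR).trans (norm_disp_le hM hM1 hε hε1 q g)
  have e : EguDelta V (ε ^ 2) q + (ε ^ 2) • gradient V q +
          (Real.sqrt 2 * (ε ^ 2) ^ 2) • ∫ g, xiPlus V q g • g ∂(gauss n)
      = ∫ g, (Rk V (ε ^ 2) q (q + disp V ε q g) • disp V ε q g - (Real.sqrt 2 * ε) • g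
        + (ε ^ 2) • gradient V q + (Real.sqrt 2 * ε ^ 4) • (xiPlus V q g • g)) ∂(gauss n) := by
    rw [integral_gauss_combination hid hacc hxi]
    unfold EguDelta
    simp_rw [integral_deltaInc V hε]
    rw [← pow_mul]
  rw [e, ← integral_const_mul]
  exact norm_integral_le_of_norm_le ((integrable_pow_gauss n 9).const_mul _)
    (Filter.Eventually.of_forall fun g => pointwise_expansion hV hM hM1 hε hε1 q g)

theorem stmt12 (n : ℕ) (hn : 1 ≤ n) (L : ℝ) (hL : 0 < L)
    (V : En n → ℝ) (hV : ContDiff ℝ (⊤ : ℕ∞) V)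
    (hper : ∀ (q : En n) (i : Fin n), V (q + L • EuclideanSpace.single i (1 : ℝ)) = V q) :
    ∃ C ≥ (0 : ℝ), ∃ dts > (0 : ℝ), ∀ dt : ℝ, 0 < dt → dt ≤ dts → ∀ q : En n,
      ‖EguDelta V dt q + dt • gradient V q +
          (Real.sqrt 2 * dt ^ 2) • ∫ g, xiPlus V q g • g ∂(gauss n)‖ ≤
        C * dt ^ ((5 : ℝ) / 2) := by
  obtain ⟨M', hM'0, hM'⟩ := exists_derivBounds hL hV hper
  have hM : DerivBounds V (M' + 1) :=
    ⟨fun q => (hM'.grad q).trans (by linarith), fun q => (hM'.fderiv_grad q).trans (by linarith),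
      fun q => (hM'.fderiv2_grad q).trans (by linarith), fun q => (hM'.third q).trans (by linarith),
      fun q => (hM'.fourth q).trans (by linarith)⟩
  have hint : 0 ≤ ∫ g, (1 + ‖g‖) ^ 9 ∂(gauss n) := integral_nonneg fun g => by positivity
  refine ⟨5000 * (M' + 1) ^ 11 * ∫ g, (1 + ‖g‖) ^ 9 ∂(gauss n), by positivity, 1, one_pos, ?_⟩
  intro dt hdt hdt1 q
  have hε : 0 < Real.sqrt dt := Real.sqrt_pos.2 hdt
  have hε1 : Real.sqrt dt ≤ 1 := Real.sqrt_le_one.2 hdt1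
  have h := expected_expansion hV hM (by linarith) hε hε1 q
  rw [Real.sq_sqrt hdt.le] at h
  refine h.trans (le_of_eq ?_)
  have : dt ^ ((5 : ℝ) / 2) = Real.sqrt dt ^ 5 := by
    rw [Real.sqrt_eq_rpow, ← Real.rpow_natCast, ← Real.rpow_mul hdt.le]
    norm_num
  rw [this]
  ring
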